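/- arXiv:2303.03980 — 2 statements merged into one kernel-verified Lean document; each statement's English description precedes it below -/
import Mathlib

section
/- Let V be a rooted directed tree with root v0 and μ=(μ_v)_{v∈V} a weight of nonzero scalars. Then: (a) For every 1≤p≤∞ and every t>0, c_p(V,tμ)=t·c_p(V,μ) and r_p(V,tμ)=t·r_p(V,μ). (b) For every v∈Chi(v0): c_p(V,μ)≤(|μ_v|^p+c_p(V(v),μ)^p)^{1/p} and r_p(V,μ)≤(|μ_{v0}|^p+r_p(V(v),μ)^p)^{1/p} for 1≤p<∞, while c_∞(V,μ)≤max(|μ_v|,c_∞(V(v),μ)) and r_∞(V,μ)≤max(|μ_{v0}|,r_∞(V(v),μ)). (c) Suppose v0 is not a leaf, and suppose that either V has finite length or ∑_{v∈Chi(v0)}|μ_v|^{-p*}<∞ (with p*=1 in the case p=∞). Then for 1<p<∞: c_p(V,μ)=(∑_{v∈Chi(v0)}(|μ_v|^p+c_p(V(v),μ)^p)^{-p*/p})^{-1/p*} and r_p(V,μ)=(|μ_{v0}|^p+(∑_{v∈Chi(v0)}r_p(V(v),μ)^{-p*})^{-p/p*})^{1/p}; and for p=∞: c_∞(V,μ)=(∑_{v∈Chi(v0)}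 max(|μ_v|,c_∞(V(v),μ))^{-1})^{-1} and r_∞(V,μ)=max(|μ_{v0}|,(∑_{v∈Chi(v0)}r_∞(V(v),μ)^{-1})^{-1}). -/
open scoped ENNReal NNReal Topology Classical
open Filter

namespace PaperTree

/-! ### Directed trees -/

variable {V : Type*}

/-- Iterated parent map of a directed tree given by a parent function. -/
def parIter (par : V → Option V) : ℕ → V → Option V
  | 0, v => some v
  | n + 1, v => (par v).bind (parIter par n)

/-- `par` is the parent function of a (countable, connected, acyclic) directed tree on `V`,
in which every vertex has at most one parent and at most one vertex (the root) has none. -/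
structure IsDirectedTree (par : V → Option V) : Prop where
  countable : Countable V
  acyclic : ∀ (v : V) (n : ℕ), 0 < n → parIter par n v ≠ some v
  connected : ∀ u v : V, ∃ (m n : ℕ) (w : V), parIter par m u = some w ∧ parIter par n v = some w
  root_unique : ∀ u v : V, par u = none → par v = none → u = v

/-- The set of children of `v`. -/
def children (par : V → Option V) (v : V) : Set V := {u : V | par u = some v}

/-- The set of descendants of `v` (including `v`); the rooted subtree `V(v)`. -/
def descendants (par : V → Option V) (v : V) : Set V := {u : V | ∃ n : ℕ, parIter par n u = some v}

def IsLeafV (par : V → Option V) (v : V) : Prop := children par v = ∅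

def Leafless (par : V → Option V) : Prop := ∀ v : V, children par v ≠ ∅

def IsRoot (par : V → Option V) (v : V) : Prop := par v = none

def Rooted (par : V → Option V) : Prop := ∃ v : V, IsRoot par v

def Unrooted (par : V → Option V) : Prop := ∀ v : V, par v ≠ none

/-- The tree has a free left end: some vertex all of whose (proper) ancestors
have exactly one child. -/
def HasFreeLeftEnd (par : V → Option V) : Prop :=
  ∃ v : V, ∀ n : ℕ, 1 ≤ n → ∀ w : V, parIter par n v = some w → ∃! u : V, u ∈ children par w

/-- The tree has finite length (all branches have uniformly bounded length). -/
def FiniteLength (par : V → Option V) : Prop := ∃ m : ℕ, ∀ u : V, parIter par (m + 1) u = none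

/-- Product of the weights along the upward path of length `n` ending at `u`;
for `u ∈ Chi^n(v)` this is `λ(v → u)`, and `pathProd par lam n v = λ(par^n(v) → v)`. -/
def pathProd {𝕜 : Type*} [Monoid 𝕜] (par : V → Option V) (lam : V → 𝕜) : ℕ → V → 𝕜
  | 0, _ => 1
  | n + 1, u => lam u * ((par u).elim 1 (pathProd par lam n))

/-- A (finite or infinite, maximal) branch starting at `v`, encoded with `Option`. -/
def IsOptBranch (par : V → Option V) (v : V) (b : ℕ → Option V) : Prop :=
  b 0 = some v ∧
  (∀ (k : ℕ) (w : V), b k = some w →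
      (children par w = ∅ ∧ b (k + 1) = none) ∨ ∃ u ∈ children par w, b (k + 1) = some u) ∧
  ∀ k : ℕ, b k = none → b (k + 1) = none

/-- An infinite branch starting at `v` (adequate for leafless trees). -/
def IsBranch (par : V → Option V) (v : V) (b : ℕ → V) : Prop :=
  b 0 = v ∧ ∀ k : ℕ, b (k + 1) ∈ children par (b k)

/-- The `[0,∞]`-valued absolute weight associated with a scalar weight. -/
noncomputable def nw {𝕜 : Type*} [RCLike 𝕜] (μ : V → 𝕜) : V → ℝ≥0∞ := fun v => (‖μ v‖₊ : ℝ≥0∞)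

/-! ### The generalized continued fractions `c_p` and resistances `r_p` -/

section Constants

/-- Conjugate exponent. -/
noncomputable def conjExp (p : ℝ) : ℝ := p / (p - 1)

variable {V : Type*}

/-- `cpAux chi w p m v` is the continued fraction `c_p` of the subtree of descendants of `v`
(with respect to the children map `chi`) truncated at depth `m`, with weight `w`. -/
noncomputable def cpAux (chi : V → Set V) (w : V → ℝ≥0∞) (p : ℝ) : ℕ → V → ℝ≥0∞
  | 0, _ => 0
  | m + 1, v =>
      if chi v = ∅ then 0
      else (∑' u : ↥(chi v),
              (w u.1 ^ p + cpAux chi w p m u.1 ^ p) ^ (-(conjExp p / p))) ^ (-(1 / conjExp p))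

/-- The continued fraction `c_p(V(v), w)` of order `1 < p < ∞`. -/
noncomputable def cpC (chi : V → Set V) (w : V → ℝ≥0∞) (p : ℝ) (v : V) : ℝ≥0∞ :=
  ⨆ m : ℕ, cpAux chi w p m v

/-- The resistance `r_p(V(v), w)` of order `1 < p < ∞`. -/
noncomputable def rpC (chi : V → Set V) (w : V → ℝ≥0∞) (p : ℝ) (v : V) : ℝ≥0∞ :=
  (w v ^ p + cpC chi w p v ^ p) ^ (1 / p)

/-- Truncated continued fraction of order `p = ∞`. -/
noncomputable def cInfAux (chi : V → Set V) (w : V → ℝ≥0∞) : ℕ → V → ℝ≥0∞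
  | 0, _ => 0
  | m + 1, v =>
      if chi v = ∅ then 0
      else (∑' u : ↥(chi v), (max (w u.1) (cInfAux chi w m u.1))⁻¹)⁻¹

/-- The continued fraction `c_∞(V(v), w)`. -/
noncomputable def cInfC (chi : V → Set V) (w : V → ℝ≥0∞) (v : V) : ℝ≥0∞ :=
  ⨆ m : ℕ, cInfAux chi w m v

/-- The resistance `r_∞(V(v), w)`. -/
noncomputable def rInfC (chi : V → Set V) (w : V → ℝ≥0∞) (v : V) : ℝ≥0∞ :=
  max (w v) (cInfC chi w v)

end Constants

/-! ### The constants `c_1` and `r_1` -/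

section COne

variable {V : Type*}

/-- `∑_{n ≥ 1} w(v_n)` along an (optional) branch `(v_0, v_1, v_2, …)`. -/
noncomputable def branchTail (w : V → ℝ≥0∞) (b : ℕ → Option V) : ℝ≥0∞ :=
  ∑' n : ℕ, (b (n + 1)).elim 0 w

/-- `c_1(V(v), w)`: the infimum over all branches starting at `v` of `∑_{n ≥ 1} w(v_n)`. -/
noncomputable def c1C (par : V → Option V) (w : V → ℝ≥0∞) (v : V) : ℝ≥0∞ :=
  ⨅ b ∈ {b : ℕ → Option V | IsOptBranch par v b}, branchTail w b

/-- `r_1(V(v), w)`. -/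
noncomputable def r1C (par : V → Option V) (w : V → ℝ≥0∞) (v : V) : ℝ≥0∞ :=
  w v + c1C par w v

end COne

section Helpers

universe uu
variable {W : Type uu}

noncomputable def gAux (chi : W → Set W) (G : W → ℝ≥0∞ → ℝ≥0∞) (H : ℝ≥0∞ → ℝ≥0∞) :
    ℕ → W → ℝ≥0∞
  | 0, _ => 0
  | m + 1, v => if chi v = ∅ then 0 else H (∑' u : ↥(chi v), G u.1 (gAux chi G H m u.1))

theorem parIter_succ' (par : W → Option W) (n : ℕ) (u : W) :
    parIter par (n + 1) u = (parIter par n u).bind par := by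
  induction n generalizing u with
  | zero => simp [parIter]
  | succ n ih =>
    change (par u).bind (parIter par (n + 1)) = ((par u).bind (parIter par n)).bind par
    cases par u with
    | none => rfl
    | some a => exact ih a

theorem gAux_stable (par : W → Option W) (G : W → ℝ≥0∞ → ℝ≥0∞) (H : ℝ≥0∞ → ℝ≥0∞) (n j : ℕ)
    (v : W) (h : ∀ u, parIter par n u ≠ some v) :
    gAux (children par) G H (n + j) v = gAux (children par) G H n v := by
  induction n generalizing v with
  | zero => exact absurd rfl (h v)
  | succ n ih =>
    rw [show n + 1 + j = (n + j) + 1 by omega]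
    simp only [gAux]
    split_ifs with hc
    · rfl
    · congr 1
      refine tsum_congr fun u => ?_
      rw [ih u.1 fun x hx => h x ?_]
      rw [parIter_succ', hx]
      exact u.2

theorem gAux_mono (chi : W → Set W) (G : W → ℝ≥0∞ → ℝ≥0∞) (H : ℝ≥0∞ → ℝ≥0∞)
    (hG : ∀ v, Antitone (G v)) (hH : Antitone H) : Monotone (gAux chi G H) := by
  refine monotone_nat_of_le_succ fun n => ?_
  induction n with
  | zero => intro v; exact zero_le
  | succ n ih =>
    intro v
    rw [gAux, gAux]
    split_ifs with hc
    · exact le_rfl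
    · exact hH (ENNReal.tsum_le_tsum fun u => hG _ (ih _))

theorem tsum_iInf_anti {ι : Type*} (f : ℕ → ι → ℝ≥0∞) (hf : Antitone f)
    (h0 : ∑' i, f 0 i ≠ ⊤) : ∑' i, ⨅ n, f n i = ⨅ n, ∑' i, f n i := by
  let _ : MeasurableSpace ι := ⊤
  have := MeasureTheory.lintegral_iInf (μ := MeasureTheory.Measure.count) (f := f)
    (fun n => measurable_from_top) hf (by rwa [MeasureTheory.lintegral_count])
  simpa [MeasureTheory.lintegral_count] using this

theorem gAux_rec (par : W → Option W) (G : W → ℝ≥0∞ → ℝ≥0∞) (H : ℝ≥0∞ → ℝ≥0∞)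
    (hG : ∀ v, Antitone (G v)) (hH : Antitone H) (hGc : ∀ v, Continuous (G v))
    (hHc : Continuous H) (v : W) (hv : children par v ≠ ∅)
    (h : FiniteLength par ∨ ∑' u : ↥(children par v), G u.1 0 < ⊤) :
    (⨆ m, gAux (children par) G H m v) =
      H (∑' u : ↥(children par v), G u.1 (⨆ m, gAux (children par) G H m u.1)) := by
  have hm := gAux_mono (children par) G H hG hH
  rcases h with ⟨M, hM⟩ | h
  · have key : ∀ u, (⨆ m, gAux (children par) G H m u) = gAux (children par) G H (M + 1) u := by
      intro u
      refine le_antisymm (iSup_le fun m => ?_) (le_iSup (fun m => gAux (children par) G H m u) _)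
      rw [← gAux_stable par G H (M + 1) m u (by intro x; simp [hM x])]
      exact hm (by omega) u
    simp only [key]
    rw [← gAux_stable par G H (M + 1) 1 v (by intro x; simp [hM x])]
    rw [gAux, if_neg hv]
  · have e1 : ∀ u, G u (⨆ m, gAux (children par) G H m u)
        = ⨅ m, G u (gAux (children par) G H m u) := fun u =>
      (hG u).map_ciSup_of_continuousAt (hGc u).continuousAt
    simp only [e1]
    rw [tsum_iInf_anti (fun m (u : ↥(children par v)) => G u.1 (gAux (children par) G H m u.1))
      (fun a b hab u => hG _ (hm hab _)) (by simpa [gAux] using h.ne)]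
    rw [hH.map_ciInf_of_continuousAt hHc.continuousAt]
    rw [← sup_iSup_nat_succ]
    simp [gAux, hv]

theorem gAux_le (chi : W → Set W) (G : W → ℝ≥0∞ → ℝ≥0∞) (H : ℝ≥0∞ → ℝ≥0∞)
    (hG : ∀ v, Antitone (G v)) (hH : Antitone H) (v u : W) (hu : u ∈ chi v) :
    (⨆ m, gAux chi G H m v) ≤ H (G u (⨆ m, gAux chi G H m u)) := by
  refine iSup_le fun m => ?_
  cases m with
  | zero => exact zero_le
  | succ m =>
    rw [gAux]
    split_ifs with hc
    · exact zero_le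
    · refine hH (le_trans (hG u (le_iSup (fun m => gAux chi G H m u) m)) ?_)
      exact ENNReal.le_tsum (f := fun u : ↥(chi v) => G u.1 (gAux chi G H m u.1)) ⟨u, hu⟩

theorem gAux_hom (chi : W → Set W) (G G' : W → ℝ≥0∞ → ℝ≥0∞) (H : ℝ≥0∞ → ℝ≥0∞) (t s : ℝ≥0∞)
    (hG : ∀ v x, G' v (t * x) = s * G v x) (hH : ∀ x, H (s * x) = t * H x) (m : ℕ) (v : W) :
    gAux chi G' H m v = t * gAux chi G H m v := by
  induction m generalizing v with
  | zero => simp [gAux]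
  | succ m ih =>
    rw [gAux, gAux]
    split_ifs with hc
    · simp
    · simp only [ih, hG, ENNReal.tsum_mul_left, hH]

noncomputable def Gp (w : W → ℝ≥0∞) (p : ℝ) : W → ℝ≥0∞ → ℝ≥0∞ :=
  fun u x => (w u ^ p + x ^ p) ^ (-(conjExp p / p))
noncomputable def Hp (p : ℝ) : ℝ≥0∞ → ℝ≥0∞ := fun x => x ^ (-(1 / conjExp p))
noncomputable def Gi (w : W → ℝ≥0∞) : W → ℝ≥0∞ → ℝ≥0∞ := fun u x => (max (w u) x)⁻¹
noncomputable def Hi : ℝ≥0∞ → ℝ≥0∞ := fun x => x⁻¹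

theorem cpAux_eq (chi : W → Set W) (w : W → ℝ≥0∞) (p : ℝ) (m : ℕ) (v : W) :
    cpAux chi w p m v = gAux chi (Gp w p) (Hp p) m v := by
  induction m generalizing v with
  | zero => rfl
  | succ m ih => simp only [cpAux, gAux, ih, Gp, Hp]

theorem cInfAux_eq (chi : W → Set W) (w : W → ℝ≥0∞) (m : ℕ) (v : W) :
    cInfAux chi w m v = gAux chi (Gi w) Hi m v := by
  induction m generalizing v with
  | zero => rfl
  | succ m ih => simp only [cInfAux, gAux, ih, Gi, Hi]

theorem cpC_eq (chi : W → Set W) (w : W → ℝ≥0∞) (p : ℝ) (v : W) :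
    cpC chi w p v = ⨆ m, gAux chi (Gp w p) (Hp p) m v := by simp only [cpC, cpAux_eq]

theorem cInfC_eq (chi : W → Set W) (w : W → ℝ≥0∞) (v : W) :
    cInfC chi w v = ⨆ m, gAux chi (Gi w) Hi m v := by simp only [cInfC, cInfAux_eq]

theorem conj_pos {p : ℝ} (hp : 1 < p) : 0 < conjExp p := div_pos (by linarith) (by linarith)

theorem rpow_neg_anti {z : ℝ} (hz : 0 ≤ z) : Antitone fun x : ℝ≥0∞ => x ^ (-z) := by
  intro a b hab
  simp only [ENNReal.rpow_neg]
  exact ENNReal.inv_le_inv.2 (ENNReal.rpow_le_rpow hab hz)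

theorem Gp_anti (w : W → ℝ≥0∞) {p : ℝ} (hp : 1 < p) (v : W) : Antitone (Gp w p v) := by
  intro a b hab
  exact rpow_neg_anti (div_pos (conj_pos hp) (by linarith)).le
    (add_le_add le_rfl (ENNReal.rpow_le_rpow hab (by linarith)))

theorem Hp_anti {p : ℝ} (hp : 1 < p) : Antitone (Hp p) :=
  rpow_neg_anti (one_div_pos.2 (conj_pos hp)).le

theorem Gp_cont (w : W → ℝ≥0∞) (p : ℝ) (v : W) : Continuous (Gp w p v) :=
  ENNReal.continuous_rpow_const.comp (continuous_const.add ENNReal.continuous_rpow_const)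

theorem Hp_cont (p : ℝ) : Continuous (Hp p) := ENNReal.continuous_rpow_const

theorem Gi_anti (w : W → ℝ≥0∞) (v : W) : Antitone (Gi w v) := fun _ _ hab =>
  ENNReal.inv_le_inv.2 (max_le_max le_rfl hab)
theorem Hi_anti : Antitone Hi := fun _ _ hab => ENNReal.inv_le_inv.2 hab
theorem Gi_cont (w : W → ℝ≥0∞) (v : W) : Continuous (Gi w v) :=
  continuous_inv.comp (continuous_const.max continuous_id)
theorem Hi_cont : Continuous Hi := continuous_inv

theorem mul_rpow_good {t : ℝ≥0∞} (h0 : t ≠ 0) (ht : t ≠ ⊤) (x : ℝ≥0∞) (z : ℝ) :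
    (t * x) ^ z = t ^ z * x ^ z := by
  rw [ENNReal.mul_rpow_eq_ite]
  simp only [h0, ht, false_and, false_or]
  split_ifs with h
  · simp_all
  · rfl

theorem rp_hom {t : ℝ≥0∞} (h0 : t ≠ 0) (ht : t ≠ ⊤) (a b : ℝ≥0∞) (p z : ℝ) :
    ((t * a) ^ p + (t * b) ^ p) ^ z = t ^ (p * z) * (a ^ p + b ^ p) ^ z := by
  rw [mul_rpow_good h0 ht, mul_rpow_good h0 ht, ← mul_add, mul_rpow_good, ENNReal.rpow_mul]
  · simp [ENNReal.rpow_eq_zero_iff, h0, ht]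
  · simp [ENNReal.rpow_eq_top_iff, h0, ht]

theorem cpC_hom {t : ℝ≥0∞} (h0 : t ≠ 0) (ht : t ≠ ⊤) {p : ℝ} (hp : 1 < p) (chi : W → Set W)
    (w : W → ℝ≥0∞) (v : W) : cpC chi (fun v => t * w v) p v = t * cpC chi w p v := by
  have hq := conj_pos hp
  rw [cpC_eq, cpC_eq, ENNReal.mul_iSup]
  refine iSup_congr fun m => gAux_hom _ _ _ _ t (t ^ (-conjExp p)) (fun v x => ?_) (fun x => ?_) m v
  · simp only [Gp]
    rw [rp_hom h0 ht]
    congr 2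
    field_simp
  · simp only [Hp]
    rw [mul_rpow_good, ← ENNReal.rpow_mul]
    · rw [show -conjExp p * -(1 / conjExp p) = 1 by field_simp, ENNReal.rpow_one]
    · simp [ENNReal.rpow_eq_zero_iff, h0, ht]
    · simp [ENNReal.rpow_eq_top_iff, h0, ht]

theorem mul_max' (t a b : ℝ≥0∞) : max (t * a) (t * b) = t * max a b :=
  ((mul_right_mono (a := t)).map_max (a := a) (b := b)).symm

theorem cInfC_hom {t : ℝ≥0∞} (h0 : t ≠ 0) (ht : t ≠ ⊤) (chi : W → Set W)
    (w : W → ℝ≥0∞) (v : W) : cInfC chi (fun v => t * w v) v = t * cInfC chi w v := by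
  rw [cInfC_eq, cInfC_eq, ENNReal.mul_iSup]
  refine iSup_congr fun m => gAux_hom _ _ _ _ t t⁻¹ (fun v x => ?_) (fun x => ?_) m v
  · simp only [Gi]
    rw [mul_max', ENNReal.mul_inv (Or.inl h0) (Or.inl ht)]
  · simp only [Hi]
    rw [ENNReal.mul_inv (by simp [ht]) (by simp [h0]), inv_inv]

theorem c1C_hom {t : ℝ≥0∞} (h0 : t ≠ 0) (ht : t ≠ ⊤) (par : W → Option W)
    (w : W → ℝ≥0∞) (v : W) : c1C par (fun v => t * w v) v = t * c1C par w v := by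
  unfold c1C
  rw [ENNReal.mul_iInf_of_ne h0 ht]
  refine iInf_congr fun b => ?_
  rw [ENNReal.mul_iInf_of_ne h0 ht]
  refine iInf_congr fun _ => ?_
  unfold branchTail
  rw [← ENNReal.tsum_mul_left]
  refine tsum_congr fun n => ?_
  cases b (n + 1) <;> simp

theorem c1C_le (par : W → Option W) (w : W → ℝ≥0∞) (v u : W) (hu : u ∈ children par v) :
    c1C par w v ≤ w u + c1C par w u := by
  unfold c1C
  simp only [ENNReal.add_iInf]
  refine le_iInf₂ fun b hb => ?_
  obtain ⟨hb0, hb1, hb2⟩ := hb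
  let b' : ℕ → Option W := fun n => Nat.casesOn n (some v) b
  refine le_trans (iInf₂_le b' ?_) ?_
  · refine ⟨rfl, ?_, ?_⟩
    · intro k x hx
      cases k with
      | zero =>
        obtain rfl : v = x := by simpa [b'] using hx
        exact Or.inr ⟨u, hu, hb0⟩
      | succ k => exact hb1 k x hx
    · intro k hk
      cases k with
      | zero => simp [b'] at hk
      | succ k => exact hb2 k hk
  · unfold branchTail
    rw [tsum_eq_zero_add' ENNReal.summable]
    simp [b', hb0]

theorem nw_smul {𝕜 : Type*} [RCLike 𝕜] (μ : W → 𝕜) (t : ℝ) (ht : 0 < t) :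
    (nw fun v => (t : 𝕜) * μ v) = fun v => ENNReal.ofReal t * nw μ v := by
  funext v
  simp only [nw]
  rw [nnnorm_mul, ENNReal.coe_mul]
  congr 1
  rw [← enorm_eq_nnnorm, ← ofReal_norm]
  simp [abs_of_pos ht]

theorem cpC_rec (par : W → Option W) (w : W → ℝ≥0∞) {p : ℝ} (hp : 1 < p) (v : W)
    (hv : children par v ≠ ∅)
    (h : FiniteLength par ∨ (∑' u : ↥(children par v), w u.1 ^ (-(conjExp p))) < ⊤) :
    cpC (children par) w p v = (∑' u : ↥(children par v),
      (w u.1 ^ p + cpC (children par) w p u.1 ^ p) ^ (-(conjExp p / p))) ^ (-(1 / conjExp p)) := by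
  have hp0 : 0 < p := by linarith
  simp only [cpC_eq]
  refine gAux_rec par (Gp w p) (Hp p) (Gp_anti w hp) (Hp_anti hp) (Gp_cont w p) (Hp_cont p) v hv
    (h.imp_right fun h => ?_)
  convert h using 3 with u
  simp only [Gp]
  rw [ENNReal.zero_rpow_of_pos hp0, add_zero, ← ENNReal.rpow_mul]
  congr 1
  field_simp

theorem Hp_Gp (w : W → ℝ≥0∞) {p : ℝ} (hp : 1 < p) (u : W) (x : ℝ≥0∞) :
    Hp p (Gp w p u x) = (w u ^ p + x ^ p) ^ (1 / p) := by
  have := conj_pos hp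
  simp only [Hp, Gp]
  rw [← ENNReal.rpow_mul]
  congr 1
  field_simp

end Helpers

/-- Theorem 5.3 / `t-rec1`: positive homogeneity, subtree inequalities,
and recursive identities for the constants `c_p` and `r_p`, `1 ≤ p ≤ ∞`. -/
theorem statement4
    {𝕜 : Type*} [RCLike 𝕜] {V : Type*} (par : V → Option V) (hTree : IsDirectedTree par)
    (root : V) (hroot : IsRoot par root) (μ : V → 𝕜) (hμ : ∀ v : V, μ v ≠ 0) :
    -- (a) positive homogeneity in the weight, for all `1 ≤ p ≤ ∞`
    (∀ t : ℝ, 0 < t →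
      (∀ p : ℝ, 1 < p →
        cpC (children par) (nw fun v => (t : 𝕜) * μ v) p root
            = ENNReal.ofReal t * cpC (children par) (nw μ) p root ∧
        rpC (children par) (nw fun v => (t : 𝕜) * μ v) p root
            = ENNReal.ofReal t * rpC (children par) (nw μ) p root) ∧
      (c1C par (nw fun v => (t : 𝕜) * μ v) root = ENNReal.ofReal t * c1C par (nw μ) root ∧
        r1C par (nw fun v => (t : 𝕜) * μ v) root = ENNReal.ofReal t * r1C par (nw μ) root) ∧
      (cInfC (children par) (nw fun v => (t : 𝕜) * μ v) root
          = ENNReal.ofReal t * cInfC (children par) (nw μ) root ∧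
        rInfC (children par) (nw fun v => (t : 𝕜) * μ v) root
          = ENNReal.ofReal t * rInfC (children par) (nw μ) root)) ∧
    -- (b) subtree inequalities, for every child `v` of the root
    (∀ v ∈ children par root,
      (∀ p : ℝ, 1 < p →
        cpC (children par) (nw μ) p root
            ≤ (nw μ v ^ p + cpC (children par) (nw μ) p v ^ p) ^ (1 / p) ∧
        rpC (children par) (nw μ) p root
            ≤ (nw μ root ^ p + rpC (children par) (nw μ) p v ^ p) ^ (1 / p)) ∧
      (c1C par (nw μ) root ≤ nw μ v + c1C par (nw μ) v ∧
        r1C par (nw μ) root ≤ nw μ root + r1C par (nw μ) v) ∧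
      (cInfC (children par) (nw μ) root ≤ max (nw μ v) (cInfC (children par) (nw μ) v) ∧
        rInfC (children par) (nw μ) root ≤ max (nw μ root) (rInfC (children par) (nw μ) v))) ∧
    -- (c) recursive identities when the root is not a leaf
    (children par root ≠ ∅ →
      (∀ p : ℝ, 1 < p →
        (FiniteLength par ∨
            (∑' v : ↥(children par root), nw μ v.1 ^ (-(conjExp p))) < ⊤) →
        cpC (children par) (nw μ) p root
            = (∑' v : ↥(children par root),
                (nw μ v.1 ^ p + cpC (children par) (nw μ) p v.1 ^ p) ^ (-(conjExp p / p)))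
              ^ (-(1 / conjExp p)) ∧
        rpC (children par) (nw μ) p root
            = (nw μ root ^ p +
                (∑' v : ↥(children par root),
                  rpC (children par) (nw μ) p v.1 ^ (-(conjExp p))) ^ (-(p / conjExp p)))
              ^ (1 / p)) ∧
      ((FiniteLength par ∨ (∑' v : ↥(children par root), (nw μ v.1)⁻¹) < ⊤) →
        cInfC (children par) (nw μ) root
            = (∑' v : ↥(children par root),
                (max (nw μ v.1) (cInfC (children par) (nw μ) v.1))⁻¹)⁻¹ ∧
        rInfC (children par) (nw μ) root
            = max (nw μ root)
                (∑' v : ↥(children par root), (rInfC (children par) (nw μ) v.1)⁻¹)⁻¹)) := by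
  refine ⟨fun t ht => ?_, fun v hv => ?_, fun hne => ?_⟩
  · have h0 : ENNReal.ofReal t ≠ 0 := by simpa using ht
    have h1 : ENNReal.ofReal t ≠ ⊤ := ENNReal.ofReal_ne_top
    rw [nw_smul μ t ht]
    refine ⟨fun p hp => ⟨cpC_hom h0 h1 hp _ _ _, ?_⟩, ⟨c1C_hom h0 h1 _ _ _, ?_⟩,
      ⟨cInfC_hom h0 h1 _ _ _, ?_⟩⟩
    · unfold rpC
      rw [cpC_hom h0 h1 hp, rp_hom h0 h1, show p * (1 / p) = 1 by field_simp, ENNReal.rpow_one]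
    · unfold r1C
      rw [c1C_hom h0 h1, mul_add]
    · unfold rInfC
      rw [cInfC_hom h0 h1, mul_max']
  · have key : ∀ p : ℝ, 1 < p → cpC (children par) (nw μ) p root
            ≤ (nw μ v ^ p + cpC (children par) (nw μ) p v ^ p) ^ (1 / p) := by
      intro p hp
      have := gAux_le (children par) (Gp (nw μ) p) (Hp p) (Gp_anti _ hp) (Hp_anti hp) root v hv
      rw [Hp_Gp _ hp] at this
      simpa only [cpC_eq] using this
    have keyi : cInfC (children par) (nw μ) root
        ≤ max (nw μ v) (cInfC (children par) (nw μ) v) := by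
      have := gAux_le (children par) (Gi (nw μ)) Hi (Gi_anti _) Hi_anti root v hv
      simpa only [cInfC_eq, Hi, Gi, inv_inv] using this
    refine ⟨fun p hp => ⟨key p hp, ?_⟩, ⟨c1C_le _ _ _ _ hv, ?_⟩, keyi, ?_⟩
    · have hp0 : 0 < p := by linarith
      exact ENNReal.rpow_le_rpow (add_le_add le_rfl
        (ENNReal.rpow_le_rpow (key p hp) hp0.le)) (by positivity)
    · exact add_le_add le_rfl (c1C_le _ _ _ _ hv)
    · exact max_le_max le_rfl keyi
  · refine ⟨fun p hp h => ?_, fun h => ?_⟩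
    · have hc := cpC_rec par (nw μ) hp root hne h
      have hq := conj_pos hp
      refine ⟨hc, ?_⟩
      have e : ∀ v : ↥(children par root), rpC (children par) (nw μ) p v.1 ^ (-(conjExp p))
          = (nw μ v.1 ^ p + cpC (children par) (nw μ) p v.1 ^ p) ^ (-(conjExp p / p)) := by
        intro v
        rw [rpC, ← ENNReal.rpow_mul]
        congr 1
        field_simp
      rw [tsum_congr e, rpC, hc, ← ENNReal.rpow_mul,
        show -(1 / conjExp p) * p = -(p / conjExp p) by field_simp]
    · have hc : cInfC (children par) (nw μ) root
            = (∑' v : ↥(children par root),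
                (max (nw μ v.1) (cInfC (children par) (nw μ) v.1))⁻¹)⁻¹ := by
        simp only [cInfC_eq]
        refine gAux_rec par (Gi (nw μ)) Hi (Gi_anti (nw μ)) Hi_anti (Gi_cont (nw μ)) Hi_cont root hne
          (h.imp_right fun h => ?_)
        simpa [Gi] using h
      refine ⟨hc, ?_⟩
      rw [rInfC, hc]
      rfl
end PaperTree
end

section
/- Let V be a leafless rooted directed tree and μ=(μ_v)_{v∈V} a weight of nonzero scalars. Suppose the unweighted backward shift B is an operator on c_0(V,μ). Then the following assertions are equivalent: (i) B is chaotic on c_0(V,μ); (ii) there is a weight μ̃ on V with (μ_v/μ̃_v)_{v∈V}∈c_0(V) such that c_∞(V(v),μ̃)<∞ for every v∈V; (iii) for every v∈V there is a weight μ̃ on V(v) with (μ_u/μ̃_u)_{u∈V(v)}∈c_0(V(v)) such that c_∞(V(v),μ̃)<∞. -/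
open scoped ENNReal NNReal Topology Classical
open Filter

namespace PaperTree

/-! ### Directed trees -/

variable {V : Type*}

/-! ### Linear dynamics -/

section Dynamics

variable {𝕜 : Type*} [RCLike 𝕜] {X : Type*} [AddCommGroup X] [Module 𝕜 X] [TopologicalSpace X]

/-- An operator is hypercyclic if some vector has dense orbit. -/
def Hypercyclic (T : X →L[𝕜] X) : Prop :=
  ∃ x : X, Dense (Set.range fun n : ℕ => (T ^ n) x)

/-- A periodic point of the operator `T`. -/
def IsPeriodicPoint (T : X →L[𝕜] X) (x : X) : Prop :=
  ∃ N : ℕ, 1 ≤ N ∧ (T ^ N) x = x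

/-- An operator is chaotic if it is hypercyclic and has a dense set of periodic points. -/
def ChaoticOp (T : X →L[𝕜] X) : Prop :=
  Hypercyclic T ∧ Dense {x : X | IsPeriodicPoint T x}

/-- Topological mixing. -/
def MixingOp (T : X →L[𝕜] X) : Prop :=
  ∀ U₁ U₂ : Set X, IsOpen U₁ → IsOpen U₂ → U₁.Nonempty → U₂.Nonempty →
    ∃ m : ℕ, ∀ n : ℕ, m ≤ n → ((⇑(T ^ n)) '' U₁ ∩ U₂).Nonempty

/-- Weak mixing: `T ⊕ T` is hypercyclic on `X × X`. -/
def WeaklyMixingOp (T : X →L[𝕜] X) : Prop :=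
  Hypercyclic (T.prodMap T)

variable {V : Type*}

/-- `T` is (a representation via the coefficient embedding `ι` of) the weighted backward
shift `B_λ` as an operator on `X`: for every `x ∈ X` and every vertex `v` the defining
series converges unconditionally to the `v`-th coefficient of `T x`. -/
def IsShiftRep (par : V → Option V) (lam : V → 𝕜) (ι : X →ₗ[𝕜] V → 𝕜) (T : X →L[𝕜] X) : Prop :=
  ∀ (x : X) (v : V), HasSum (fun u : ↥(children par v) => lam u.1 * ι x u.1) (ι (T x) v)

end Dynamics

/-! ### Concrete sequence spaces `ℓ^p(V, μ)` and `c₀(V, μ)`, up to isometry -/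

section SpaceRep

variable {𝕜 : Type*} [RCLike 𝕜] {V : Type*} {X : Type*} [NormedAddCommGroup X] [NormedSpace 𝕜 X]

/-- `X` is (an isometric copy of) the weighted space `ℓ^p(V, μ)`, the identification being
given by the coefficient embedding `ι`. -/
def IsLpSpaceRep (ι : X →ₗ[𝕜] V → 𝕜) (μ : V → 𝕜) (p : ℝ) : Prop :=
  Function.Injective ι ∧
  (∀ f : V → 𝕜, (∑' v : V, (‖f v * μ v‖₊ : ℝ≥0∞) ^ p) < ⊤ ↔ f ∈ Set.range ι) ∧
  ∀ x : X, (‖x‖₊ : ℝ≥0∞) = (∑' v : V, (‖ι x v * μ v‖₊ : ℝ≥0∞) ^ p) ^ (1 / p)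

/-- `X` is (an isometric copy of) the weighted space `c₀(V, μ)`. -/
def IsC0SpaceRep (ι : X →ₗ[𝕜] V → 𝕜) (μ : V → 𝕜) : Prop :=
  Function.Injective ι ∧
  (∀ f : V → 𝕜, (∀ ε : ℝ, 0 < ε → {v : V | ε ≤ ‖f v * μ v‖}.Finite) ↔ f ∈ Set.range ι) ∧
  ∀ x : X, (‖x‖₊ : ℝ≥0∞) = ⨆ v : V, (‖ι x v * μ v‖₊ : ℝ≥0∞)

end SpaceRep

section Helpers

variable {V : Type*}

lemma parIter_add (par : V → Option V) (m n : ℕ) (v : V) :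
    parIter par (m + n) v = (parIter par m v).bind (parIter par n) := by
  induction m generalizing v with
  | zero => simp [parIter]
  | succ m ih =>
    rw [Nat.succ_add]
    simp only [parIter]
    cases h : par v with
    | none => simp
    | some w => simp [ih]

lemma exists_dep (par : V → Option V) (hTree : IsDirectedTree par) (root : V)
    (hroot : IsRoot par root) :
    ∃ dep : V → ℕ, (∀ u v, par u = some v → dep u = dep v + 1) ∧
      (∀ n u v, parIter par n u = some v → dep u = dep v + n) := by
  have hr : ∀ n w, parIter par n root = some w → n = 0 ∧ root = w := by
    intro n w h
    cases n with
    | zero => simpa [parIter] using h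
    | succ n => simp [parIter, show par root = none from hroot] at h
  have hex : ∀ v, ∃ n, parIter par n v = some root := by
    intro v
    obtain ⟨m, n, w, h1, h2⟩ := hTree.connected root v
    obtain ⟨_, rfl⟩ := hr _ _ h1
    exact ⟨n, h2⟩
  have huniq : ∀ v m n, parIter par m v = some root → parIter par n v = some root → m ≤ n → m = n := by
    intro v m n h1 h2 hle
    obtain ⟨k, rfl⟩ := Nat.exists_eq_add_of_le hle
    rw [parIter_add, h1] at h2
    have := (hr k root (by simpa using h2)).1
    omega
  choose dep hdep using hex
  have key : ∀ n u v, parIter par n u = some v → dep u = dep v + n := by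
    intro n u v h
    have h2 : parIter par (n + dep v) u = some root := by
      rw [parIter_add, h]; simpa using hdep v
    rcases le_total (dep u) (n + dep v) with hl | hl
    · have := huniq u _ _ (hdep u) h2 hl; omega
    · have := huniq u _ _ h2 (hdep u) hl; omega
  refine ⟨dep, ?_, key⟩
  intro u v h
  exact key 1 u v (by simp [parIter, h])

lemma desc_self (par : V → Option V) (v : V) : v ∈ descendants par v := ⟨0, rfl⟩

lemma desc_child {par : V → Option V} {v p u : V} (hp : p ∈ descendants par v)
    (hu : u ∈ children par p) : u ∈ descendants par v := by
  obtain ⟨n, hn⟩ := hp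
  refine ⟨n + 1, ?_⟩
  have : par u = some p := hu
  simp [parIter, this, hn]

lemma desc_parent {par : V → Option V} {v p u : V} (hu : u ∈ descendants par v)
    (hp : u ∈ children par p) (hne : u ≠ v) : p ∈ descendants par v := by
  obtain ⟨n, hn⟩ := hu
  have : par u = some p := hp
  cases n with
  | zero => simp [parIter] at hn; exact absurd hn hne
  | succ n => exact ⟨n, by simpa [parIter, this] using hn⟩

/-- Induction on descendants. -/
lemma desc_induction {par : V → Option V} {v : V} {P : V → Prop} (h0 : P v)
    (hs : ∀ p ∈ descendants par v, P p → ∀ u ∈ children par p, P u) :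
    ∀ u ∈ descendants par v, P u := by
  rintro u ⟨n, hn⟩
  induction n generalizing u with
  | zero => simp [parIter] at hn; exact hn ▸ h0
  | succ n ih =>
    simp only [parIter] at hn
    cases h : par u with
    | none => simp [h] at hn
    | some p =>
      have hp : parIter par n p = some v := by simpa [h] using hn
      exact hs p ⟨n, hp⟩ (ih p hp) u h

/-- A flow out of `v`, in `c₀(μ)`. -/
structure FlowAt {𝕜 : Type*} [RCLike 𝕜] (par : V → Option V) (μ : V → 𝕜) (v : V) (f : V → 𝕜) :
    Prop where
  one : f v = 1
  off : ∀ u, u ∉ descendants par v → f u = 0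
  flow : ∀ u ∈ descendants par v, HasSum (fun w : ↥(children par u) => f w.1) (f u)
  c0 : ∀ ε : ℝ, 0 < ε → {u : V | ε ≤ ‖f u * μ u‖}.Finite

/-! #### from flows to finite constants -/

lemma cInf_le_of_flow {𝕜 : Type*} [RCLike 𝕜] {par : V → Option V} {v : V} {f μt : V → 𝕜}
    (hne : ∀ u, μt u ≠ 0) (hone : f v = 1)
    (hflow : ∀ u ∈ descendants par v, HasSum (fun w : ↥(children par u) => f w.1) (f u))
    {C : ℝ≥0∞} (hC : C ≠ ⊤) (hb : ∀ u, ‖μt u‖ₑ * ‖f u‖ₑ ≤ C) :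
    cInfC (children par) (nw μt) v < ⊤ := by
  have key : ∀ m, ∀ u ∈ descendants par v,
      cInfAux (children par) (nw μt) m u * ‖f u‖ₑ ≤ C := by
    intro m
    induction m with
    | zero => intro u _; simp [cInfAux]
    | succ m ih =>
      intro u hu
      simp only [cInfAux]
      split_ifs with h
      · simp
      set S : ℝ≥0∞ := ∑' w : ↥(children par u),
        (max (nw μt w.1) (cInfAux (children par) (nw μt) m w.1))⁻¹ with hS
      have h1 : ‖f u‖ₑ ≤ ∑' w : ↥(children par u), ‖f w.1‖ₑ := by
        rw [← (hflow u hu).tsum_eq]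
        exact enorm_tsum_le_tsum_enorm
      have h2 : ∑' w : ↥(children par u), ‖f w.1‖ₑ ≤ C * S := by
        rw [hS, ← ENNReal.tsum_mul_left]
        refine ENNReal.tsum_le_tsum fun w => ?_
        have hmax : ‖f w.1‖ₑ * max (nw μt w.1) (cInfAux (children par) (nw μt) m w.1) ≤ C := by
          rw [mul_comm]
          rcases max_choice (nw μt w.1) (cInfAux (children par) (nw μt) m w.1) with h | h
          · rw [h]; exact hb w.1
          · rw [h]; exact ih w.1 (desc_child hu w.2)
        rw [← div_eq_mul_inv]
        refine (ENNReal.le_div_iff_mul_le (Or.inl ?_) (Or.inr hC)).2 hmax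
        have : 0 < nw μt w.1 := by simp [nw, hne]
        exact (lt_of_lt_of_le this (le_max_left _ _)).ne'
      calc S⁻¹ * ‖f u‖ₑ ≤ S⁻¹ * (C * S) := by gcongr; exact h1.trans h2
        _ = C * (S * S⁻¹) := by ring
        _ ≤ C * 1 := by gcongr; exact ENNReal.mul_inv_le_one S
        _ = C := mul_one C
  refine lt_of_le_of_lt (iSup_le fun m => ?_) (lt_top_iff_ne_top.2 hC)
  simpa [hone] using key m v (desc_self par v)

lemma weight_of_flows {𝕜 : Type*} [RCLike 𝕜] [Countable V] {par : V → Option V} {μ : V → 𝕜}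
    (hμ : ∀ v, μ v ≠ 0) (h : ∀ v, ∃ f, FlowAt par μ v f) :
    ∃ μt : V → 𝕜, (∀ v : V, μt v ≠ 0) ∧
        (∀ ε : ℝ, 0 < ε → {v : V | ε ≤ ‖μ v‖ / ‖μt v‖}.Finite) ∧
        ∀ v : V, cInfC (children par) (nw μt) v < ⊤ := by
  choose f hf using h
  obtain ⟨n, hn⟩ := Countable.exists_injective_nat V
  let t : V → V → ℝ := fun u v => min ‖f v u * μ u‖ (1 / ((n v : ℝ) + 1))
  have ht1 : ∀ u v, t u v ≤ 1 := fun u v => by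
    refine (min_le_right _ _).trans ?_
    rw [div_le_one (by positivity)]
    have : (0 : ℝ) ≤ n v := by positivity
    linarith
  have hbdd : ∀ u, BddAbove (Set.range (t u)) := fun u => ⟨1, by rintro _ ⟨v, rfl⟩; exact ht1 u v⟩
  let g : V → ℝ := fun u => ⨆ v, t u v
  have hle : ∀ u v, t u v ≤ g u := fun u v => le_ciSup (hbdd u) v
  have hpos : ∀ u, 0 < g u := fun u => by
    refine lt_of_lt_of_le ?_ (hle u u)
    refine lt_min ?_ (by positivity)
    rw [(hf u).one]; simpa using hμ u
  have hg1 : ∀ u, g u ≤ 1 := fun u => by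
    have : Nonempty V := ⟨u⟩
    exact ciSup_le (ht1 u)
  have hg0 : ∀ ε : ℝ, 0 < ε → {u : V | ε ≤ g u}.Finite := by
    intro ε hε
    have hfin : {v : V | (n v : ℝ) + 1 < 2 / ε}.Finite := by
      obtain ⟨K, hK⟩ := exists_nat_gt (2 / ε)
      refine Set.Finite.subset ((Set.finite_lt_nat K).preimage hn.injOn) ?_
      intro v hv
      simp only [Set.mem_ofPred_eq] at hv
      have : (n v : ℝ) < K := by linarith
      exact_mod_cast this
    refine Set.Finite.subset (hfin.biUnion fun v _ => (hf v).c0 (ε / 2) (by positivity)) ?_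
    intro u hu
    have : Nonempty V := ⟨u⟩
    simp only [Set.mem_ofPred_eq] at hu
    obtain ⟨v, hv⟩ := exists_lt_of_lt_ciSup (lt_of_lt_of_le (half_lt_self hε) hu)
    obtain ⟨h1, h2⟩ := lt_min_iff.1 hv
    simp only [Set.mem_iUnion, Set.mem_ofPred_eq, exists_prop]
    refine ⟨v, ?_, h1.le⟩
    rw [lt_div_iff₀ (by positivity)] at h2 ⊢
    linarith
  have hdom : ∀ v, ∃ C : ℝ, 0 ≤ C ∧ ∀ u, ‖f v u * μ u‖ ≤ C * g u := by
    intro v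
    obtain ⟨M, hM⟩ : ∃ M : ℝ, ∀ u ∈ {u | 1 ≤ ‖f v u * μ u‖}, ‖f v u * μ u‖ ≤ M := by
      obtain ⟨M, hM⟩ := (((hf v).c0 1 one_pos).image (fun u => ‖f v u * μ u‖)).bddAbove
      exact ⟨M, fun u hu => hM ⟨u, hu, rfl⟩⟩
    have hM' : ∀ u, ‖f v u * μ u‖ ≤ max M 1 := by
      intro u
      by_cases h : 1 ≤ ‖f v u * μ u‖
      · exact (hM u h).trans (le_max_left _ _)
      · exact (not_le.1 h).le.trans (le_max_right _ _)
    have hM1 : 1 ≤ max M 1 := le_max_right _ _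
    have hn0 : (0 : ℝ) ≤ n v := by positivity
    refine ⟨max M 1 * (n v + 1), by positivity, fun u => ?_⟩
    have hx := hle u v
    rcases min_choice ‖f v u * μ u‖ (1 / ((n v : ℝ) + 1)) with h | h
    · have : ‖f v u * μ u‖ ≤ g u := by rw [← h]; exact hx
      have : 1 ≤ max M 1 * ((n v : ℝ) + 1) := by nlinarith
      nlinarith [hpos u]
    · have h2 : 1 / ((n v : ℝ) + 1) ≤ g u := by rw [← h]; exact hx
      rw [div_le_iff₀ (by positivity)] at h2
      have := hM' u
      nlinarith
  refine ⟨fun u => μ u / ((Real.sqrt (g u) : ℝ) : 𝕜), ?_, ?_, ?_⟩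
  · intro v
    refine div_ne_zero (hμ v) ?_
    exact_mod_cast (Real.sqrt_pos.2 (hpos v)).ne'
  · intro ε hε
    refine (hg0 (ε ^ 2) (by positivity)).subset ?_
    intro u hu
    have hs := Real.sqrt_pos.2 (hpos u)
    have hm : 0 < ‖μ u‖ := norm_pos_iff.2 (hμ u)
    have e : ‖μ u‖ / ‖μ u / ((Real.sqrt (g u) : ℝ) : 𝕜)‖ = Real.sqrt (g u) := by
      rw [norm_div, RCLike.norm_ofReal, abs_of_pos hs]
      field_simp
    simp only [Set.mem_ofPred_eq, e] at hu ⊢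
    exact (Real.le_sqrt hε.le (hpos u).le).1 hu
  · intro v
    obtain ⟨C, hC0, hC⟩ := hdom v
    refine cInf_le_of_flow (f := f v) ?_ (hf v).one (hf v).flow (C := ENNReal.ofReal C)
      ENNReal.ofReal_ne_top ?_
    · intro v
      refine div_ne_zero (hμ v) ?_
      exact_mod_cast (Real.sqrt_pos.2 (hpos v)).ne'
    · intro u
      rw [← enorm_mul, ← ofReal_norm]
      apply ENNReal.ofReal_le_ofReal
      have hs := Real.sqrt_pos.2 (hpos u)
      have hs1 : Real.sqrt (g u) ≤ 1 := by exact Real.sqrt_le_one.2 (hg1 u)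
      have e : ‖μ u / ((Real.sqrt (g u) : ℝ) : 𝕜) * f v u‖ = ‖f v u * μ u‖ / Real.sqrt (g u) := by
        rw [norm_mul, norm_div, RCLike.norm_ofReal, abs_of_pos hs, norm_mul]
        ring
      rw [e, div_le_iff₀ hs]
      refine (hC u).trans ?_
      have h1 : g u = Real.sqrt (g u) * Real.sqrt (g u) := (Real.mul_self_sqrt (hpos u).le).symm
      have : g u ≤ Real.sqrt (g u) := by nlinarith
      gcongr

/-! #### from finite constants to flows -/

lemma cInfAux_mono (chi : V → Set V) (w : V → ℝ≥0∞) (m : ℕ) (v : V) :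
    cInfAux chi w m v ≤ cInfAux chi w (m + 1) v := by
  induction m generalizing v with
  | zero => simp [cInfAux]
  | succ m ih =>
    rw [cInfAux.eq_2 chi w v m, cInfAux.eq_2 chi w v (m + 1)]
    split_ifs with h
    · exact le_rfl
    · apply ENNReal.inv_le_inv.2
      refine ENNReal.tsum_le_tsum fun u => ?_
      exact ENNReal.inv_le_inv.2 (max_le_max le_rfl (ih u.1))

lemma tsum_iInf_nat {α : Type*} {f : ℕ → α → ℝ≥0∞} (h : Antitone f) (h0 : ∑' a, f 0 a ≠ ⊤) :
    ∑' a, ⨅ n, f n a = ⨅ n, ∑' a, f n a := by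
  let _ : MeasurableSpace α := ⊤
  have := MeasureTheory.lintegral_iInf (μ := MeasureTheory.Measure.count) (f := f)
    (fun n => measurable_from_top) h (by rwa [MeasureTheory.lintegral_count' measurable_from_top])
  simpa only [MeasureTheory.lintegral_count' measurable_from_top] using this

lemma cInf_ge (chi : V → Set V) (w : V → ℝ≥0∞) (v : V) (hv : chi v ≠ ∅)
    (hfin : ∑' u : ↥(chi v), (w u.1)⁻¹ ≠ ⊤) :
    (∑' u : ↥(chi v), (max (w u.1) (cInfC chi w u.1))⁻¹)⁻¹ ≤ cInfC chi w v := by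
  have hmono : ∀ u, Monotone fun m => cInfAux chi w m u := fun u =>
    monotone_nat_of_le_succ fun m => cInfAux_mono chi w m u
  have h1 : ∀ u : ↥(chi v), (max (w u.1) (cInfC chi w u.1))⁻¹
      = ⨅ m, (max (w u.1) (cInfAux chi w m u.1))⁻¹ := by
    intro u
    rw [cInfC, ← ENNReal.inv_iSup]
    congr 1
    exact sup_iSup
  simp_rw [h1]
  rw [tsum_iInf_nat (f := fun m (u : ↥(chi v)) => (max (w u.1) (cInfAux chi w m u.1))⁻¹)]
  · rw [ENNReal.inv_iInf]
    refine iSup_le fun m => ?_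
    refine le_trans ?_ (le_iSup (fun m => cInfAux chi w m v) (m + 1))
    simp [cInfAux, hv]
  · intro m n hmn u
    exact ENNReal.inv_le_inv.2 (max_le_max le_rfl (hmono u.1 hmn))
  · simpa [cInfAux] using hfin

lemma flow_of_weight {𝕜 : Type*} [RCLike 𝕜] {par : V → Option V} (hLeafless : Leafless par)
    {dep : V → ℕ} (hdep : ∀ n u v, parIter par n u = some v → dep u = dep v + n)
    {μ : V → 𝕜} (hμ : ∀ v, μ v ≠ 0)
    (hsum : ∀ v, ∑' u : ↥(children par v), (‖μ u.1‖ₑ)⁻¹ ≠ ⊤) {v : V} {μt : V → 𝕜}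
    (hne : ∀ u ∈ descendants par v, μt u ≠ 0)
    (hc0 : ∀ ε : ℝ, 0 < ε → {u ∈ descendants par v | ε ≤ ‖μ u‖ / ‖μt u‖}.Finite)
    (hfin : cInfC (children par) (nw μt) v < ⊤) : ∃ f, FlowAt par μ v f := by
  let w : V → ℝ≥0∞ := nw μt
  have hw : ∀ u, w u = ‖μt u‖ₑ := fun u => rfl
  let c : V → ℝ≥0∞ := cInfC (children par) w
  let r : V → ℝ≥0∞ := fun u => max (w u) (c u)
  let S : V → ℝ≥0∞ := fun p => ∑' u : ↥(children par p), (r u.1)⁻¹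
  -- bound
  obtain ⟨K, hK0, hK⟩ : ∃ K : ℝ, 0 < K ∧ ∀ u ∈ descendants par v, ‖μ u‖ ≤ K * ‖μt u‖ := by
    obtain ⟨M, hM⟩ := ((hc0 1 one_pos).image (fun u => ‖μ u‖ / ‖μt u‖)).bddAbove
    refine ⟨max M 1, by positivity, fun u hu => ?_⟩
    rw [← div_le_iff₀ (norm_pos_iff.2 (hne u hu))]
    by_cases h : 1 ≤ ‖μ u‖ / ‖μt u‖
    · exact (hM ⟨u, ⟨hu, h⟩, rfl⟩).trans (le_max_left _ _)
    · exact (not_le.1 h).le.trans (le_max_right _ _)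
  have hwsum : ∀ p ∈ descendants par v, ∑' u : ↥(children par p), (w u.1)⁻¹ ≠ ⊤ := by
    intro p hp
    have : ∑' u : ↥(children par p), (w u.1)⁻¹
        ≤ ENNReal.ofReal K * ∑' u : ↥(children par p), (‖μ u.1‖ₑ)⁻¹ := by
      rw [← ENNReal.tsum_mul_left]
      refine ENNReal.tsum_le_tsum fun u => ?_
      have h1 : ‖μ u.1‖ₑ ≤ ENNReal.ofReal K * w u.1 := by
        rw [hw, ← ofReal_norm, ← ofReal_norm, ← ENNReal.ofReal_mul hK0.le]
        exact ENNReal.ofReal_le_ofReal (hK u.1 (desc_child hp u.2))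
      have hw0 : w u.1 ≠ 0 := by
        rw [hw]; simpa using hne u.1 (desc_child hp u.2)
      have hm0 : ‖μ u.1‖ₑ ≠ 0 := by simpa using hμ u.1
      rw [← div_eq_mul_inv, ENNReal.le_div_iff_mul_le (Or.inl hm0) (Or.inl enorm_ne_top)]
      calc (w u.1)⁻¹ * ‖μ u.1‖ₑ ≤ (w u.1)⁻¹ * (ENNReal.ofReal K * w u.1) := by gcongr
        _ = ENNReal.ofReal K * (w u.1 * (w u.1)⁻¹) := by ring
        _ ≤ ENNReal.ofReal K * 1 := by gcongr; exact ENNReal.mul_inv_le_one _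
        _ = _ := mul_one _
    exact ne_top_of_le_ne_top (ENNReal.mul_ne_top ENNReal.ofReal_ne_top (hsum p)) this
  have hSc : ∀ p ∈ descendants par v, (S p)⁻¹ ≤ c p := fun p hp =>
    cInf_ge (children par) w p (hLeafless p) (hwsum p hp)
  have hStop : ∀ p ∈ descendants par v, S p ≠ ⊤ := fun p hp =>
    ne_top_of_le_ne_top (hwsum p hp) (ENNReal.tsum_le_tsum fun u =>
      ENNReal.inv_le_inv.2 (le_max_left _ _))
  let q : V → ℝ≥0∞ := fun u => (r u)⁻¹ * (par u).elim 0 (fun p => (S p)⁻¹)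
  let f : V → ℝ≥0∞ := fun u =>
    if u ∈ descendants par v then pathProd par q (dep u - dep v) u else 0
  have hfv : f v = 1 := by simp [f, desc_self, pathProd]
  have hfoff : ∀ u, u ∉ descendants par v → f u = 0 := fun u hu => by simp [f, hu]
  have hfstep : ∀ p ∈ descendants par v, ∀ u ∈ children par p,
      f u = (f p * (S p)⁻¹) * (r u)⁻¹ := by
    intro p hp u hu
    have hpar : par u = some p := hu
    have hd1 := hdep 1 u p (by simp [parIter, hpar])
    obtain ⟨n, hn⟩ := id hp
    have hd2 := hdep n p v hn
    have e : dep u - dep v = (dep p - dep v) + 1 := by omega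
    simp only [f, hp, desc_child hp hu, if_true, e, pathProd, q, hpar, Option.elim_some]
    ring
  have hbound : ∀ u ∈ descendants par v, f u * r u ≤ r v := by
    refine desc_induction ?_ ?_
    · rw [hfv, one_mul]
    · intro p hp ih u hu
      rw [hfstep p hp u hu]
      calc f p * (S p)⁻¹ * (r u)⁻¹ * r u = f p * (S p)⁻¹ * (r u * (r u)⁻¹) := by ring
        _ ≤ f p * c p * 1 := by
          gcongr
          · exact hSc p hp
          · exact ENNReal.mul_inv_le_one _
        _ ≤ f p * r p := by rw [mul_one]; gcongr; exact le_max_right _ _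
        _ ≤ r v := ih
  have hrv : r v ≠ ⊤ := by
    simp only [r, ne_eq, max_eq_top, not_or]
    exact ⟨enorm_ne_top, hfin.ne⟩
  have hr0 : ∀ u ∈ descendants par v, r u ≠ 0 := by
    intro u hu
    have : 0 < w u := by rw [hw]; simpa using hne u hu
    exact (lt_of_lt_of_le this (le_max_left _ _)).ne'
  have hftop : ∀ u, f u ≠ ⊤ := by
    intro u
    by_cases hu : u ∈ descendants par v
    · intro h
      have := hbound u hu
      rw [h, ENNReal.top_mul (hr0 u hu)] at this
      exact hrv (top_le_iff.1 this)
    · simp [hfoff u hu]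
  have hfsum : ∀ p ∈ descendants par v, ∑' u : ↥(children par p), f u.1 = f p := by
    intro p hp
    have : ∑' u : ↥(children par p), f u.1 = ∑' u : ↥(children par p), (f p * (S p)⁻¹) * (r u.1)⁻¹ :=
      tsum_congr fun u => hfstep p hp u.1 u.2
    rw [this, ENNReal.tsum_mul_left]
    change f p * (S p)⁻¹ * S p = f p
    by_cases h0 : S p = 0
    · have h1 := hSc p hp
      rw [h0, ENNReal.inv_zero, top_le_iff] at h1
      have h2 := hbound p hp
      have h3 : r p = ⊤ := by simp [r, h1]
      have h4 : f p = 0 := by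
        by_contra hh
        rw [h3, ENNReal.mul_top hh, top_le_iff] at h2
        exact hrv h2
      simp [h4]
    · rw [mul_assoc, ENNReal.inv_mul_cancel h0 (hStop p hp), mul_one]
  refine ⟨fun u => ((f u).toReal : 𝕜), ?_, ?_, ?_, ?_⟩
  · simp [hfv]
  · intro u hu; simp [hfoff u hu]
  · intro p hp
    rw [RCLike.hasSum_ofReal]
    have h1 := ENNReal.hasSum_toReal (f := fun u : ↥(children par p) => f u.1)
      (by rw [hfsum p hp]; exact hftop p)
    rwa [← ENNReal.tsum_toReal_eq (fun u : ↥(children par p) => hftop u.1), hfsum p hp] at h1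
  · intro ε hε
    have hM : 0 < (r v).toReal := ENNReal.toReal_pos (hr0 v (desc_self par v)) hrv
    refine (hc0 (ε / (r v).toReal) (by positivity)).subset ?_
    intro u hu
    simp only [Set.mem_ofPred_eq] at hu ⊢
    by_cases hud : u ∈ descendants par v
    · refine ⟨hud, ?_⟩
      have h1 : f u * w u ≤ r v := le_trans (by gcongr; exact le_max_left _ _) (hbound u hud)
      have h2 := ENNReal.toReal_mono hrv h1
      rw [ENNReal.toReal_mul, hw, toReal_enorm] at h2
      have hm : 0 < ‖μt u‖ := norm_pos_iff.2 (hne u hud)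
      rw [norm_mul, RCLike.norm_ofReal, abs_of_nonneg ENNReal.toReal_nonneg] at hu
      rw [div_le_div_iff₀ hM hm]
      have := norm_nonneg (μ u)
      calc ε * ‖μt u‖ ≤ ((f u).toReal * ‖μ u‖) * ‖μt u‖ := by gcongr
        _ = ‖μ u‖ * ((f u).toReal * ‖μt u‖) := by ring
        _ ≤ ‖μ u‖ * (r v).toReal := by gcongr
    · exfalso
      rw [hfoff u hud] at hu
      simp at hu
      linarith

/-! #### abstract chaos criterion -/

lemma chaotic_of {𝕜 : Type*} [RCLike 𝕜] {X : Type*} [NormedAddCommGroup X] [NormedSpace 𝕜 X]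
    [CompleteSpace X] [Countable V] (T : X →L[𝕜] X) (e : V → X)
    (hd : Dense (Submodule.span 𝕜 (Set.range e) : Set X))
    (h0 : ∀ v, ∀ᶠ n in atTop, (T ^ n) (e v) = 0)
    (hs : ∀ v, ∃ s : ℕ → X, Tendsto s atTop (𝓝 0) ∧ ∀ n, (T ^ n) (s n) = e v)
    (hp : ∀ v, ∃ p : ℕ → X, Tendsto p atTop (𝓝 (e v)) ∧ ∀ᶠ n in atTop, (T ^ n) (p n) = p n) :
    ChaoticOp T := by
  have H0 : ∀ x ∈ Submodule.span 𝕜 (Set.range e), ∀ᶠ n in atTop, (T ^ n) x = 0 := by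
    intro x hx
    induction hx using Submodule.span_induction with
    | mem x h => obtain ⟨v, rfl⟩ := h; exact h0 v
    | zero => simp
    | add x y _ _ hx hy =>
      filter_upwards [hx, hy] with n h1 h2
      rw [map_add, h1, h2, add_zero]
    | smul a x _ hx =>
      filter_upwards [hx] with n h1
      rw [map_smul, h1, smul_zero]
  have Hs : ∀ x ∈ Submodule.span 𝕜 (Set.range e), ∃ s : ℕ → X, Tendsto s atTop (𝓝 0) ∧
      ∀ n, (T ^ n) (s n) = x := by
    intro x hx
    induction hx using Submodule.span_induction with
    | mem x h => obtain ⟨v, rfl⟩ := h; exact hs v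
    | zero => exact ⟨fun _ => 0, tendsto_const_nhds, by simp⟩
    | add x y _ _ hx hy =>
      obtain ⟨s, hs1, hs2⟩ := hx
      obtain ⟨t, ht1, ht2⟩ := hy
      exact ⟨fun n => s n + t n, by simpa using hs1.add ht1, fun n => by rw [map_add, hs2, ht2]⟩
    | smul a x _ hx =>
      obtain ⟨s, hs1, hs2⟩ := hx
      exact ⟨fun n => a • s n, by simpa using hs1.const_smul a, fun n => by rw [map_smul, hs2]⟩
  have Hp : ∀ x ∈ Submodule.span 𝕜 (Set.range e), ∃ s : ℕ → X, Tendsto s atTop (𝓝 x) ∧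
      ∀ᶠ n in atTop, (T ^ n) (s n) = s n := by
    intro x hx
    induction hx using Submodule.span_induction with
    | mem x h => obtain ⟨v, rfl⟩ := h; exact hp v
    | zero => exact ⟨fun _ => 0, tendsto_const_nhds, by simp⟩
    | add x y _ _ hx hy =>
      obtain ⟨s, hs1, hs2⟩ := hx
      obtain ⟨t, ht1, ht2⟩ := hy
      refine ⟨fun n => s n + t n, hs1.add ht1, ?_⟩
      filter_upwards [hs2, ht2] with n h1 h2
      rw [map_add, h1, h2]
    | smul a x _ hx =>
      obtain ⟨s, hs1, hs2⟩ := hx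
      refine ⟨fun n => a • s n, hs1.const_smul a, ?_⟩
      filter_upwards [hs2] with n h1
      rw [map_smul, h1]
  constructor
  · have hsep : TopologicalSpace.IsSeparable (Submodule.span 𝕜 (Set.range e) : Set X) :=
      (Set.countable_range e).isSeparable.span 
    have : TopologicalSpace.SeparableSpace X := by
      rw [← TopologicalSpace.isSeparable_univ_iff, ← hd.closure_eq]
      exact hsep.closure
    have : SecondCountableTopology X := UniformSpace.secondCountable_of_separable X
    let B := TopologicalSpace.countableBasis X
    have hB := TopologicalSpace.isBasis_countableBasis X
    have : Countable B := (TopologicalSpace.countable_countableBasis X).to_subtype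
    have hdense : Dense (⋂ b : B, ⋃ n : ℕ, (fun x => (T ^ n) x) ⁻¹' b.1) := by
      refine dense_iInter_of_isOpen ?_ ?_
      · intro b
        exact isOpen_iUnion fun n => (hB.isOpen b.2).preimage (T ^ n).continuous
      · intro b
        rw [dense_iff_inter_open]
        intro U hU hUne
        obtain ⟨x, hxU, hx⟩ := hd.inter_open_nonempty U hU hUne
        obtain ⟨y, hyb, hy⟩ := hd.inter_open_nonempty b.1 (hB.isOpen b.2)
          (TopologicalSpace.nonempty_of_mem_countableBasis b.2)
        obtain ⟨s, hs1, hs2⟩ := Hs y hy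
        have ht : Tendsto (fun n => x + s n) atTop (𝓝 x) := by
          simpa using hs1.const_add x
        obtain ⟨n, hn1, hn2⟩ := ((ht.eventually (hU.mem_nhds hxU)).and (H0 x hx)).exists
        refine ⟨x + s n, hn1, Set.mem_iUnion.2 ⟨n, ?_⟩⟩
        simp only [Set.mem_preimage, map_add, hn2, hs2, zero_add]
        exact hyb
    obtain ⟨x, hx⟩ := hdense.nonempty
    refine ⟨x, ?_⟩
    rw [hB.dense_iff]
    intro o ho _
    have := Set.mem_iInter.1 hx ⟨o, ho⟩
    obtain ⟨n, hn⟩ := Set.mem_iUnion.1 this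
    exact ⟨_, hn, n, rfl⟩
  · rw [dense_iff_inter_open]
    intro U hU hUne
    obtain ⟨x, hxU, hx⟩ := hd.inter_open_nonempty U hU hUne
    obtain ⟨s, hs1, hs2⟩ := Hp x hx
    obtain ⟨n, ⟨hn1, hn2⟩, hn3⟩ :=
      (((hs1.eventually (hU.mem_nhds hxU)).and hs2).and (eventually_ge_atTop 1)).exists
    exact ⟨s n, hn1, n, hn3, hn2⟩

/-! #### the concrete space -/

section Concrete

variable {𝕜 : Type*} [RCLike 𝕜] {X : Type*} [NormedAddCommGroup X] [NormedSpace 𝕜 X]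

lemma coord_le {ι : X →ₗ[𝕜] V → 𝕜} {μ : V → 𝕜} (hX : IsC0SpaceRep ι μ) (x : X) (v : V) :
    ‖ι x v * μ v‖ ≤ ‖x‖ := by
  have h := hX.2.2 x
  have h1 : (‖ι x v * μ v‖₊ : ℝ≥0∞) ≤ (‖x‖₊ : ℝ≥0∞) := by
    rw [h]; exact le_iSup (fun v => (‖ι x v * μ v‖₊ : ℝ≥0∞)) v
  exact_mod_cast h1

lemma norm_le_of_coord {ι : X →ₗ[𝕜] V → 𝕜} {μ : V → 𝕜} (hX : IsC0SpaceRep ι μ) (x : X) {C : ℝ}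
    (hC : 0 ≤ C) (h : ∀ v, ‖ι x v * μ v‖ ≤ C) : ‖x‖ ≤ C := by
  lift C to ℝ≥0 using hC
  have h1 : (‖x‖₊ : ℝ≥0∞) ≤ (C : ℝ≥0∞) := by
    rw [hX.2.2 x]
    refine iSup_le fun v => ?_
    have := h v
    exact_mod_cast this
  exact_mod_cast h1

lemma exists_of_c0 {ι : X →ₗ[𝕜] V → 𝕜} {μ : V → 𝕜} (hX : IsC0SpaceRep ι μ) (f : V → 𝕜)
    (h : ∀ ε : ℝ, 0 < ε → {v : V | ε ≤ ‖f v * μ v‖}.Finite) : ∃ x, ι x = f :=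
  (hX.2.1 f).1 h

lemma c0_of_mem {ι : X →ₗ[𝕜] V → 𝕜} {μ : V → 𝕜} (hX : IsC0SpaceRep ι μ) (x : X) :
    ∀ ε : ℝ, 0 < ε → {v : V | ε ≤ ‖ι x v * μ v‖}.Finite :=
  (hX.2.1 _).2 ⟨x, rfl⟩

lemma exists_finsupp {ι : X →ₗ[𝕜] V → 𝕜} {μ : V → 𝕜} (hX : IsC0SpaceRep ι μ) (f : V → 𝕜)
    (F : Finset V) (h : ∀ v, v ∉ F → f v = 0) : ∃ x, ι x = f := by
  refine exists_of_c0 hX f fun ε hε => F.finite_toSet.subset fun v hv => ?_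
  by_contra hvF
  simp only [Set.mem_ofPred_eq, h v hvF, zero_mul, norm_zero] at hv
  linarith

lemma shift_hasSum {par : V → Option V} {ι : X →ₗ[𝕜] V → 𝕜} {T : X →L[𝕜] X}
    (hT : IsShiftRep par (fun _ : V => (1 : 𝕜)) ι T) (x : X) (v : V) :
    HasSum (fun u : ↥(children par v) => ι x u.1) (ι (T x) v) := by
  simpa using hT x v

lemma sum_inv_ne_top {par : V → Option V} {ι : X →ₗ[𝕜] V → 𝕜} {μ : V → 𝕜}
    (hX : IsC0SpaceRep ι μ) (hμ : ∀ v, μ v ≠ 0) {T : X →L[𝕜] X}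
    (hT : IsShiftRep par (fun _ : V => (1 : 𝕜)) ι T) (v : V) :
    ∑' u : ↥(children par v), (‖μ u.1‖ₑ)⁻¹ ≠ ⊤ := by
  have hb : ∀ F : Finset ↥(children par v), ∑ u ∈ F, ‖μ u.1‖⁻¹ ≤ ‖T‖ / ‖μ v‖ := by
    intro F
    let f : V → 𝕜 := fun u => if u ∈ F.image Subtype.val then ((‖μ u‖⁻¹ : ℝ) : 𝕜) else 0
    obtain ⟨x, hx⟩ := exists_finsupp hX f (F.image Subtype.val) (fun u hu => by simp only [f, hu, if_false])
    have hx1 : ‖x‖ ≤ 1 := by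
      refine norm_le_of_coord hX x zero_le_one fun u => ?_
      rw [hx]
      by_cases hu : u ∈ F.image Subtype.val
      · simp only [f, hu, if_true]
        rw [norm_mul, RCLike.norm_ofReal, abs_of_nonneg (by positivity),
          inv_mul_cancel₀ (norm_ne_zero_iff.2 (hμ u))]
      · simp only [f, hu, if_false]; simp
    have h1 := shift_hasSum hT x v
    have h2 : HasSum (fun u : ↥(children par v) => ι x u.1) (∑ u ∈ F, ι x u.1) := by
      refine hasSum_sum_of_ne_finset_zero fun u hu => ?_
      rw [hx]
      have : u.1 ∉ F.image Subtype.val := by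
        intro h
        obtain ⟨a, ha, hau⟩ := Finset.mem_image.1 h
        exact hu (Subtype.ext hau ▸ ha)
      simp only [f, this, if_false]
    have h3 : ι (T x) v = ((∑ u ∈ F, ‖μ u.1‖⁻¹ : ℝ) : 𝕜) := by
      rw [h1.unique h2, RCLike.ofReal_sum]
      refine Finset.sum_congr rfl fun u hu => ?_
      rw [hx]
      have : u.1 ∈ F.image Subtype.val := Finset.mem_image_of_mem _ hu
      simp only [f, this, if_true]
    have h4 := coord_le hX (T x) v
    rw [h3, norm_mul, RCLike.norm_ofReal, abs_of_nonneg (Finset.sum_nonneg fun _ _ => by positivity)] at h4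
    rw [le_div_iff₀ (norm_pos_iff.2 (hμ v))]
    refine h4.trans ((T.le_opNorm x).trans ?_)
    nlinarith [norm_nonneg T]
  have hs : Summable fun u : ↥(children par v) => ‖μ u.1‖⁻¹ :=
    summable_of_sum_le (fun _ => by positivity) hb
  have he : ∀ u : ↥(children par v), (‖μ u.1‖ₑ)⁻¹ = ENNReal.ofReal (‖μ u.1‖⁻¹) := fun u => by
    rw [ENNReal.ofReal_inv_of_pos (norm_pos_iff.2 (hμ _)), ofReal_norm]
  simp_rw [he]
  exact hs.tsum_ofReal_ne_top

lemma flow_of_chaotic {par : V → Option V} {dep : V → ℕ}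
    (hdep1 : ∀ u v, par u = some v → dep u = dep v + 1)
    (hdep : ∀ n u v, parIter par n u = some v → dep u = dep v + n)
    {ι : X →ₗ[𝕜] V → 𝕜} {μ : V → 𝕜}
    (hX : IsC0SpaceRep ι μ) (hμ : ∀ v, μ v ≠ 0) {T : X →L[𝕜] X}
    (hT : IsShiftRep par (fun _ : V => (1 : 𝕜)) ι T) (hch : ChaoticOp T) (v : V) :
    ∃ f, FlowAt par μ v f := by
  obtain ⟨e, he⟩ := exists_finsupp hX (Pi.single v (1 : 𝕜)) {v} (fun u hu => by
    rw [Pi.single_eq_of_ne]; simpa using hu)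
  obtain ⟨x, ⟨N, hN, hxN⟩, hxd⟩ := hch.2.exists_dist_lt e (norm_pos_iff.2 (hμ v))
  have hxv : ι x v ≠ 0 := by
    intro h0
    have h1 := coord_le hX (e - x) v
    rw [map_sub, Pi.sub_apply, he, h0, Pi.single_eq_same, sub_zero, one_mul] at h1
    rw [dist_eq_norm] at hxd
    linarith
  obtain ⟨M, rfl⟩ : ∃ M, N = M + 1 := ⟨N - 1, by omega⟩
  let y : V → 𝕜 := fun u => ι ((T ^ (M * (dep u - dep v))) x) u
  have hper : ∀ k, (T ^ (M + 1)) ((T ^ k) x) = (T ^ k) x := by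
    intro k
    rw [← mul_apply_eq_comp, ← pow_add, add_comm, pow_add,
      mul_apply_eq_comp, hxN]
  have hmod : ∀ k, (T ^ k) x = (T ^ (k % (M + 1))) x := by
    intro k
    have : ∀ a b, (T ^ (b + (M + 1) * a)) x = (T ^ b) x := by
      intro a b
      induction a with
      | zero => simp
      | succ a ih =>
        rw [show b + (M + 1) * (a + 1) = (M + 1) + (b + (M + 1) * a) by ring, pow_add,
          mul_apply_eq_comp, hper, ih]
    conv_lhs => rw [← Nat.mod_add_div k (M + 1)]
    exact this _ _
  have hyv : y v = ι x v := by simp [y]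
  have hyflow : ∀ u ∈ descendants par v, HasSum (fun w : ↥(children par u) => y w.1) (y u) := by
    rintro u ⟨n, hn⟩
    have hd := hdep n u v hn
    have e1 : ∀ w : ↥(children par u), y w.1 = ι ((T ^ (M * (n + 1))) x) w.1 := by
      intro w
      have := hdep1 w.1 u w.2
      simp only [y]
      rw [show dep w.1 - dep v = n + 1 by omega]
    have e2 : y u = ι (T ((T ^ (M * (n + 1))) x)) u := by
      simp only [y]
      rw [show dep u - dep v = n by omega, ← hper, ← mul_apply_eq_comp, ← pow_add,
        ← mul_apply_eq_comp T, ← pow_succ']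
      rw [show M + 1 + M * n = M * (n + 1) + 1 by ring]
    simp_rw [e1]
    rw [e2]
    exact shift_hasSum hT _ u
  have hyc0 : ∀ ε : ℝ, 0 < ε → {u : V | ε ≤ ‖y u * μ u‖}.Finite := by
    intro ε hε
    refine ((Finset.range (M + 1)).finite_toSet.biUnion fun i _ =>
      c0_of_mem hX ((T ^ i) x) ε hε).subset ?_
    intro u hu
    simp only [Set.mem_ofPred_eq, y] at hu
    rw [hmod] at hu
    simp only [Set.mem_iUnion]
    exact ⟨_, by simpa using Nat.mod_lt _ (Nat.succ_pos M), hu⟩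
  refine ⟨fun u => if u ∈ descendants par v then y u / ι x v else 0, ?_, ?_, ?_, ?_⟩
  · simp [desc_self, hyv, hxv]
  · intro u hu; simp [hu]
  · intro u hu
    simp only [hu, if_true]
    have : ∀ w : ↥(children par u), (if w.1 ∈ descendants par v then y w.1 / ι x v else 0)
        = y w.1 / ι x v := fun w => if_pos (desc_child hu w.2)
    simp_rw [this]
    exact (hyflow u hu).div_const _
  · intro ε hε
    have hp : 0 < ‖ι x v‖ := norm_pos_iff.2 hxv
    refine (hyc0 (ε * ‖ι x v‖) (by positivity)).subset ?_
    intro u hu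
    simp only [Set.mem_ofPred_eq] at hu ⊢
    split_ifs at hu with h
    · rw [div_mul_eq_mul_div, norm_div, le_div_iff₀ hp] at hu
      exact hu
    · simp at hu; linarith

lemma chaotic_of_flows [CompleteSpace X] [Countable V] {par : V → Option V} {dep : V → ℕ}
    (hdep1 : ∀ u v, par u = some v → dep u = dep v + 1)
    (hdep : ∀ n u v, parIter par n u = some v → dep u = dep v + n)
    {ι : X →ₗ[𝕜] V → 𝕜} {μ : V → 𝕜}
    (hX : IsC0SpaceRep ι μ) {T : X →L[𝕜] X}
    (hT : IsShiftRep par (fun _ : V => (1 : 𝕜)) ι T) (hfl : ∀ v, ∃ f, FlowAt par μ v f) :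
    ChaoticOp T := by
  have he : ∀ v, ∃ x, ι x = Pi.single v (1 : 𝕜) := fun v =>
    exists_finsupp hX (Pi.single v (1 : 𝕜)) {v} (fun u hu => by
      rw [Pi.single_eq_of_ne]; simpa using hu)
  choose e he using he
  -- nilpotency
  have hnil : ∀ k (x : X), (∀ u, k ≤ dep u → ι x u = 0) → (T ^ k) x = 0 := by
    intro k
    induction k with
    | zero =>
      intro x hx
      apply hX.1
      ext u
      simp [hx u]
    | succ k ih =>
      intro x hx
      rw [pow_succ, mul_apply_eq_comp]
      apply ih
      intro u hu
      refine (shift_hasSum hT x u).unique ?_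
      have : ∀ w : ↥(children par u), ι x w.1 = 0 := fun w =>
        hx w.1 (by have := hdep1 w.1 u w.2; omega)
      simp_rw [this]
      exact hasSum_zero
  have h0 : ∀ v n, dep v < n → (T ^ n) (e v) = 0 := by
    intro v n hn
    apply hnil
    intro u hu
    rw [he, Pi.single_eq_of_ne]
    rintro rfl
    omega
  -- restricted flows
  have hmain : ∀ v, ∃ g : (ℕ → Prop) → X,
      (∀ P : ℕ → ℕ → Prop, (∀ N d, P N d → N ≤ d) →
        Tendsto (fun N => g (P N)) atTop (𝓝 0)) ∧
      (∀ (j : ℕ) (P : ℕ → Prop), (∀ i < j, ¬ P (dep v + i)) →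
        (T ^ j) (g P) = g (fun d => P (d + j))) ∧
      (∀ P Q : ℕ → Prop, (∀ k, P (dep v + k) ↔ Q (dep v + k)) → g P = g Q) ∧
      (∀ P : ℕ → Prop, P (dep v) → g P = e v + g (fun d => P d ∧ d ≠ dep v)) ∧
      g (fun _ => False) = 0 := by
    intro v
    obtain ⟨f, hf⟩ := hfl v
    have hg : ∀ P : ℕ → Prop, ∃ x, ι x = fun u => if P (dep u) then f u else 0 := by
      intro P
      refine exists_of_c0 hX _ fun ε hε => (hf.c0 ε hε).subset fun u hu => ?_
      simp only [Set.mem_ofPred_eq] at hu ⊢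
      split_ifs at hu with h
      · exact hu
      · simp at hu; linarith
    choose g hg using hg
    have hext : ∀ P Q : ℕ → Prop, (∀ k, P (dep v + k) ↔ Q (dep v + k)) → g P = g Q := by
      intro P Q h
      apply hX.1
      rw [hg, hg]
      ext u
      by_cases hu : u ∈ descendants par v
      · obtain ⟨n, hn⟩ := hu
        rw [hdep n u v hn]
        simp [h n]
      · simp [hf.off u hu]
    refine ⟨g, ?_, ?_, hext, ?_, ?_⟩
    · intro P hP
      rw [NormedAddGroup.tendsto_nhds_zero]
      intro ε hε
      obtain ⟨K, hK⟩ := ((hf.c0 (ε / 2) (by positivity)).image dep).bddAbove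
      filter_upwards [eventually_gt_atTop K] with N hN
      refine lt_of_le_of_lt (norm_le_of_coord hX _ (half_pos hε).le fun u => ?_) (half_lt_self hε)
      rw [hg]
      by_cases hPu : P N (dep u)
      · simp only [hPu, if_true]
        by_contra hlt
        have h1 : dep u ≤ K := hK ⟨u, (not_le.1 hlt).le, rfl⟩
        have h2 := hP N _ hPu
        omega
      · simp only [hPu, if_false, zero_mul, norm_zero]; positivity
    · have hone : ∀ P : ℕ → Prop, ¬ P (dep v) → T (g P) = g (fun d => P (d + 1)) := by
        intro P hP
        apply hX.1
        ext u
        refine (shift_hasSum hT (g P) u).unique ?_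
        simp only [hg]
        have e1 : ∀ w : ↥(children par u), dep w.1 = dep u + 1 := fun w => hdep1 w.1 u w.2
        simp_rw [e1]
        by_cases hPu : P (dep u + 1)
        · simp only [hPu, if_true]
          by_cases hu : u ∈ descendants par v
          · exact hf.flow u hu
          · rw [hf.off u hu]
            have : ∀ w : ↥(children par u), f w.1 = 0 := by
              intro w
              apply hf.off
              intro hw
              refine hu (desc_parent hw w.2 ?_)
              intro hwv
              apply hP
              rw [← hwv, e1 w]
              exact hPu
            simp_rw [this]
            exact hasSum_zero
        · simp only [hPu, if_false]
          exact hasSum_zero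
      intro j
      induction j with
      | zero => intro P _; rfl
      | succ j ih =>
        intro P hP
        rw [pow_succ, mul_apply_eq_comp, hone P (by simpa using hP 0 (by omega)), ih]
        · refine hext _ _ fun k => ?_
          rw [show dep v + k + j + 1 = dep v + k + (j + 1) by ring]
        · intro i hi
          exact hP (i + 1) (by omega)
    · intro P hP
      apply hX.1
      rw [map_add, hg, hg, he]
      ext u
      simp only [Pi.add_apply]
      by_cases huv : u = v
      · subst huv
        simp [hP, hf.one]
      · rw [Pi.single_eq_of_ne huv, zero_add]
        by_cases hu : u ∈ descendants par v
        · obtain ⟨n, hn⟩ := hu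
          have hd := hdep n u v hn
          have : dep u ≠ dep v := by
            intro h
            have : n = 0 := by omega
            subst this
            simp [parIter] at hn
            exact huv hn
          simp [this]
        · simp [hf.off u hu]
    · apply hX.1
      rw [hg]
      ext u
      simp
  have heg : ∀ v, (∃ s : ℕ → X, Tendsto s atTop (𝓝 0) ∧ ∀ n, (T ^ n) (s n) = e v) ∧
      (∃ p : ℕ → X, Tendsto p atTop (𝓝 (e v)) ∧ ∀ᶠ n in atTop, (T ^ n) (p n) = p n) := by
    intro v
    obtain ⟨g, hlim, hpow, hext, hsplit, hzero⟩ := hmain v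
    constructor
    · refine ⟨fun n => g (fun d => d = dep v + n), hlim (fun n d => d = dep v + n)
        (fun n d h => by omega), fun n => ?_⟩
      rw [hpow n _ (fun i hi h => by omega), hsplit (fun d => d + n = dep v + n) rfl]
      rw [hext _ (fun _ => False) (fun k => by simp), hzero, add_zero]
    · let P : ℕ → ℕ → Prop := fun N d => ∃ k, d = dep v + (k + 1) * N
      refine ⟨fun N => e v + g (P N), ?_, ?_⟩
      · have := hlim P (by
          rintro N d ⟨k, rfl⟩
          nlinarith [Nat.zero_le (k * N), Nat.zero_le (dep v)])
        simpa using this.const_add (e v)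
      · filter_upwards [eventually_gt_atTop (dep v)] with N hN
        rw [map_add, h0 v N hN, zero_add, hpow N]
        · rw [hsplit _ ⟨0, by ring⟩]
          congr 1
          refine hext _ _ fun k => ?_
          constructor
          · rintro ⟨⟨m, hm⟩, hk⟩
            cases m with
            | zero => exfalso; apply hk; simp at hm; omega
            | succ m => exact ⟨m, by nlinarith⟩
          · rintro ⟨m, hm⟩
            refine ⟨⟨m + 1, by nlinarith⟩, ?_⟩
            have : 0 < (m + 1) * N := Nat.mul_pos (by omega) (by omega)
            omega
        · rintro i hi ⟨k, hk⟩
          have : N ≤ (k + 1) * N := Nat.le_mul_of_pos_left _ (by omega)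
          omega
  refine chaotic_of T e ?_ (fun v => ?_) (fun v => (heg v).1) (fun v => (heg v).2)
  · rw [Metric.dense_iff]
    intro x ε hε
    have hF := c0_of_mem hX x (ε / 2) (by positivity)
    refine ⟨∑ v ∈ hF.toFinset, ι x v • e v, ?_, ?_⟩
    · rw [Metric.mem_ball, dist_comm, dist_eq_norm]
      refine lt_of_le_of_lt (norm_le_of_coord hX _ (half_pos hε).le fun u => ?_) (half_lt_self hε)
      have hc : ι (∑ v ∈ hF.toFinset, ι x v • e v) u = if u ∈ hF.toFinset then ι x u else 0 := by
        simp only [map_sum, map_smul, he, Finset.sum_apply, Pi.smul_apply, Pi.single_apply,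
          smul_eq_mul, mul_ite, mul_one, mul_zero, Finset.sum_ite_eq]
      rw [map_sub, Pi.sub_apply, hc]
      split_ifs with h
      · simp; positivity
      · rw [sub_zero]
        have : ¬ (ε / 2 ≤ ‖ι x u * μ u‖) := by simpa using h
        exact (not_le.1 this).le
    · exact Submodule.sum_mem _ fun v _ => Submodule.smul_mem _ _
        (Submodule.subset_span ⟨v, rfl⟩)
  · filter_upwards [eventually_gt_atTop (dep v)] with n hn
    exact h0 v n hn

end Concrete

end Helpers

/-- Theorem 7.4 / `t-char0mu`: on a leafless rooted tree, the unweighted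
backward shift, as an operator on `c₀(V,μ)`, is chaotic iff there is a comparable weight
`μ̃` (with `μ/μ̃ ∈ c₀`) whose constants `c_∞(V(v), μ̃)` are all finite; equivalently such a
weight exists locally on each subtree `V(v)`. -/
theorem statement12
    {𝕜 : Type*} [RCLike 𝕜] {V : Type*} (par : V → Option V) (hTree : IsDirectedTree par)
    (hLeafless : Leafless par) (root : V) (hroot : IsRoot par root)
    (μ : V → 𝕜) (hμ : ∀ v : V, μ v ≠ 0)
    {X : Type*} [NormedAddCommGroup X] [NormedSpace 𝕜 X] [CompleteSpace X]
    (ι : X →ₗ[𝕜] V → 𝕜) (hX : IsC0SpaceRep ι μ)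
    (T : X →L[𝕜] X) (hT : IsShiftRep par (fun _ : V => (1 : 𝕜)) ι T) :
    -- (i) ⇔ (ii)
    (ChaoticOp T ↔
      ∃ μt : V → 𝕜, (∀ v : V, μt v ≠ 0) ∧
        (∀ ε : ℝ, 0 < ε → {v : V | ε ≤ ‖μ v‖ / ‖μt v‖}.Finite) ∧
        ∀ v : V, cInfC (children par) (nw μt) v < ⊤) ∧
    -- (ii) ⇔ (iii)
    ((∃ μt : V → 𝕜, (∀ v : V, μt v ≠ 0) ∧
        (∀ ε : ℝ, 0 < ε → {v : V | ε ≤ ‖μ v‖ / ‖μt v‖}.Finite) ∧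
        ∀ v : V, cInfC (children par) (nw μt) v < ⊤) ↔
      ∀ v : V, ∃ μt : V → 𝕜, (∀ u ∈ descendants par v, μt u ≠ 0) ∧
        (∀ ε : ℝ, 0 < ε → {u ∈ descendants par v | ε ≤ ‖μ u‖ / ‖μt u‖}.Finite) ∧
        cInfC (children par) (nw μt) v < ⊤) := by
  obtain ⟨dep, hdep1, hdep⟩ := exists_dep par hTree root hroot
  have hcount : Countable V := hTree.countable
  have h12 := fun h : ChaoticOp T =>
    weight_of_flows hμ (fun v => flow_of_chaotic hdep1 hdep hX hμ hT h v)
  have h23 : (∃ μt : V → 𝕜, (∀ v : V, μt v ≠ 0) ∧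
        (∀ ε : ℝ, 0 < ε → {v : V | ε ≤ ‖μ v‖ / ‖μt v‖}.Finite) ∧
        ∀ v : V, cInfC (children par) (nw μt) v < ⊤) →
      ∀ v : V, ∃ μt : V → 𝕜, (∀ u ∈ descendants par v, μt u ≠ 0) ∧
        (∀ ε : ℝ, 0 < ε → {u ∈ descendants par v | ε ≤ ‖μ u‖ / ‖μt u‖}.Finite) ∧
        cInfC (children par) (nw μt) v < ⊤ := by
    rintro ⟨μt, h1, h2, h3⟩ v
    exact ⟨μt, fun u _ => h1 u, fun ε hε => (h2 ε hε).subset fun u hu => hu.2, h3 v⟩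
  have h31 : (∀ v : V, ∃ μt : V → 𝕜, (∀ u ∈ descendants par v, μt u ≠ 0) ∧
        (∀ ε : ℝ, 0 < ε → {u ∈ descendants par v | ε ≤ ‖μ u‖ / ‖μt u‖}.Finite) ∧
        cInfC (children par) (nw μt) v < ⊤) → ChaoticOp T := by
    intro h
    refine chaotic_of_flows hdep1 hdep hX hT fun v => ?_
    obtain ⟨μt, h1, h2, h3⟩ := h v
    exact flow_of_weight hLeafless hdep hμ (sum_inv_ne_top hX hμ hT) h1 h2 h3
  exact ⟨⟨h12, fun h => h31 (h23 h)⟩, ⟨h23, fun h => h12 (h31 h)⟩⟩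
end PaperTree
end
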